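/- arXiv:2506.18762 — 4 statements merged into one kernel-verified Lean document; each statement's English description precedes it below -/
import Mathlib

section
/- Let S ⊆ ℕ be a finite set with |S| = 2m ≥ 2 and let 𝒫 = P_1|P_2|…|P_m ∈ π₂(S) be a perfect matching in canonical form. Then sgn(𝒫) = (−1)^{Σ_{k=1}^{m} S(P_k, P_k ∪ P_{k+1} ∪ … ∪ P_m)}. -/
/-- A perfect matching of a finite set `S`: a partition of `S` into blocks of cardinality `2`.
The empty set has `∅` as its unique perfect matching. -/
def IsPerfectMatching {α : Type*} [DecidableEq α] (S : Finset α) (M : Finset (Finset α)) : Prop :=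
  (∀ b ∈ M, b.card = 2) ∧ (∀ b ∈ M, ∀ c ∈ M, b ≠ c → Disjoint b c) ∧ M.sup id = S

open Classical in
/-- `π₂ S`: the finset of all perfect matchings of `S`. -/
noncomputable def perfMatchings {α : Type*} [DecidableEq α] (S : Finset α) :
    Finset (Finset (Finset α)) :=
  S.powerset.powerset.filter (fun M => IsPerfectMatching S M)

/-- The larger element of a block of natural numbers. -/
def bmax (b : Finset ℕ) : ℕ := b.sup id

/-- The smaller element of a block of natural numbers. -/
def bmin (b : Finset ℕ) : ℕ := (b.erase (bmax b)).sup id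

/-- The block of the matching `M` containing `v`. -/
def blockOf (M : Finset (Finset ℕ)) (v : ℕ) : Finset ℕ := (M.filter (fun b => v ∈ b)).sup id

/-- The blocks `P_1 | P_2 | … | P_m` of the matching `M` in canonical order, i.e. listed
in increasing order of their larger elements. -/
def blockList (M : Finset (Finset ℕ)) : List (Finset ℕ) :=
  ((M.image bmax).sort (· ≤ ·)).map (blockOf M)

/-- The bottom row `[s_{1_1}, s_{1_2}, s_{2_1}, s_{2_2}, …]` of the two-line representation of
the permutation `σ_𝒫` associated to the canonical form of the matching `M`. -/
def flatList (M : Finset (Finset ℕ)) : List ℕ :=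
  (blockList M).foldr (fun b l => bmin b :: bmax b :: l) []

/-- The number of inversions of a list of naturals. -/
def inversions (l : List ℕ) : ℕ :=
  ∑ i ∈ Finset.range l.length, ∑ j ∈ Finset.range l.length,
    if i < j ∧ l.getD j 0 < l.getD i 0 then 1 else 0

/-- The sign of a perfect matching `M` of a finset of naturals: the sign of the associated
permutation `σ_𝒫`, i.e. the parity of the number of inversions of the bottom row of its
two-line representation (the top row being the elements of `S` sorted increasingly). -/
def pmSign (M : Finset (Finset ℕ)) : ℤ := (-1) ^ inversions (flatList M)

/-- `S(F, P)`: the sum of the (1-based) positions inside `P` of the elements of `F`, minus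
`r (r + 1) / 2` where `r = |F|`. -/
def SP (F P : Finset ℕ) : ℕ :=
  (∑ i ∈ F, ((P.filter (fun p => p < i)).card + 1)) - F.card * (F.card + 1) / 2

/-- `e_T`: the product, in the exterior algebra, of the generators indexed by `T`, taken in
increasing order. -/
noncomputable def eProd (k : Type*) {V : Type*} [Field k] [AddCommGroup V] [Module k V]
    (e : ℕ → V) (T : Finset ℕ) : ExteriorAlgebra k V :=
  ((T.sort (· ≤ ·)).map (fun i => ExteriorAlgebra.ι k (e i))).prod

/-- `X_R`: the product, in the Clifford algebra, of the generators indexed by `R`, taken in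
increasing order. -/
noncomputable def XProd {k V : Type*} [Field k] [AddCommGroup V] [Module k V]
    (q : QuadraticForm k V) (e : ℕ → V) (R : Finset ℕ) : CliffordAlgebra q :=
  ((R.sort (· ≤ ·)).map (fun i => CliffordAlgebra.ι q (e i))).prod

/-- `d_P`: the composition of the skew-derivations indexed by `P`, taken in increasing order. -/
noncomputable def dComp {k V : Type*} [Field k] [AddCommGroup V] [Module k V]
    {q : QuadraticForm k V} (d : ℕ → Module.End k (CliffordAlgebra q)) (P : Finset ℕ) :
    Module.End k (CliffordAlgebra q) :=
  ((P.sort (· ≤ ·)).map d).prod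

/-- `Λ(𝒫)`: the product of `λ_{ab} = polar q (e a) (e b)` over the blocks `{a < b}` of the
matching `M`. -/
noncomputable def lamProd {k V : Type*} [Field k] [AddCommGroup V] [Module k V]
    (q : QuadraticForm k V) (e : ℕ → V) (M : Finset (Finset ℕ)) : k :=
  ∏ bl ∈ M, QuadraticMap.polar q (e (bmin bl)) (e (bmax bl))

/-- The element `u_Q` of the Clifford algebra. -/
noncomputable def uElem {k V : Type*} [Field k] [AddCommGroup V] [Module k V]
    (q : QuadraticForm k V) (e : ℕ → V) (μ : k) (Q : Finset ℕ) : CliffordAlgebra q :=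
  (μ / 2 ^ ((insert 0 Q).card / 2)) •
    ∑ R ∈ (insert 0 Q).powerset.filter (fun R => R.card % 2 = (insert 0 Q).card % 2),
      (((-1 : k) ^ (SP R (insert 0 Q) + ((insert 0 Q).card - R.card) / 2) * 2 ^ (R.card / 2)) *
        ∑ M ∈ perfMatchings ((insert 0 Q) \ R), (pmSign M : k) * lamProd q e M) • XProd q e R

/-- Flattening of a list of blocks. -/
def flatAux (L : List (Finset ℕ)) : List ℕ := L.foldr (fun b l => bmin b :: bmax b :: l) []

theorem inversions_cons (a : ℕ) (l : List ℕ) :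
    inversions (a :: l) = l.countP (fun x => decide (x < a)) + inversions l := by
  have key : ∀ l : List ℕ, (∑ j ∈ Finset.range l.length, if l.getD j 0 < a then 1 else 0)
      = l.countP (fun x => decide (x < a)) := by
    intro l
    induction l with
    | nil => simp
    | cons b l ih =>
      rw [List.length_cons, Finset.sum_range_succ', List.countP_cons, ← ih]
      simp
  unfold inversions
  rw [List.length_cons, Finset.sum_range_succ', ← key, add_comm]
  congr 1
  · rw [Finset.sum_range_succ']
    simp
  · refine Finset.sum_congr rfl fun i _ => ?_
    rw [Finset.sum_range_succ']
    simp

theorem block_pair (b : Finset ℕ) (hb : b.card = 2) :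
    bmin b < bmax b ∧ b = {bmin b, bmax b} := by
  obtain ⟨x, y, hxy, rfl⟩ := Finset.card_eq_two.mp hb
  wlog h : x < y generalizing x y with H
  · rw [Finset.pair_comm]
    exact H y x hxy.symm (by rw [Finset.pair_comm]; exact hb) (by omega)
  have h1 : bmax {x, y} = y := by simp [bmax]; omega
  have h2 : bmin {x, y} = x := by
    have : ({x, y} : Finset ℕ).erase y = {x} := by
      ext z; simp; omega
    rw [bmin, h1, this]; simp
  rw [h1, h2]; exact ⟨h, rfl⟩

theorem mem_foldr_union (L : List (Finset ℕ)) (x : ℕ) :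
    x ∈ L.foldr (· ∪ ·) ∅ ↔ ∃ b ∈ L, x ∈ b := by
  induction L with
  | nil => simp
  | cons b L ih => simp [ih]

theorem pair_filter (x y a : ℕ) (h : x < y) :
    (({x, y} : Finset ℕ).filter (fun p => p < a)).card =
      (if x < a then 1 else 0) + (if y < a then 1 else 0) := by
  rw [Finset.filter_insert, Finset.filter_singleton]
  have hne : x ≠ y := h.ne
  split_ifs <;> simp [Finset.card_pair hne]

theorem count_flat (a : ℕ) (L : List (Finset ℕ)) (h2 : ∀ b ∈ L, b.card = 2)
    (hd : L.Pairwise Disjoint) :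
    (flatAux L).countP (fun x => decide (x < a)) =
      ((L.foldr (· ∪ ·) ∅).filter (fun p => p < a)).card := by
  induction L with
  | nil => simp [flatAux]
  | cons b L ih =>
    rw [List.pairwise_cons] at hd
    have ih' := ih (fun c hc => h2 c (by simp [hc])) hd.2
    obtain ⟨hlt, hb⟩ := block_pair b (h2 b (by simp))
    have hdis : Disjoint b (L.foldr (· ∪ ·) ∅) := by
      rw [Finset.disjoint_left]
      intro x hx hx'
      obtain ⟨c, hc, hxc⟩ := (mem_foldr_union L x).mp hx'
      exact Finset.disjoint_left.mp (hd.1 c hc) hx hxc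
    have e : flatAux (b :: L) = bmin b :: bmax b :: flatAux L := rfl
    rw [e, List.countP_cons, List.countP_cons, ih', List.foldr_cons, Finset.filter_union,
      Finset.card_union_of_disjoint (Finset.disjoint_filter_filter hdis)]
    have : (b.filter (fun p => p < a)).card =
      (if bmin b < a then 1 else 0) + (if bmax b < a then 1 else 0) := by
      conv_lhs => rw [hb]
      exact pair_filter _ _ _ hlt
    rw [this]
    simp only [decide_eq_true_eq]
    omega

theorem inv_flat (L : List (Finset ℕ)) (h2 : ∀ b ∈ L, b.card = 2)
    (hd : L.Pairwise Disjoint) :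
    inversions (flatAux L) = ∑ K ∈ Finset.range L.length,
        SP (L.getD K ∅) ((L.drop K).foldr (· ∪ ·) ∅) := by
  induction L with
  | nil => simp [flatAux, inversions]
  | cons b L ih =>
    have hd0 := hd
    rw [List.pairwise_cons] at hd
    have h2' : ∀ c ∈ L, c.card = 2 := fun c hc => h2 c (by simp [hc])
    have ih' := ih h2' hd.2
    obtain ⟨hlt, hb⟩ := block_pair b (h2 b (by simp))
    have e : flatAux (b :: L) = bmin b :: bmax b :: flatAux L := rfl
    have c1 := count_flat (bmin b) _ h2 hd0
    have c2 := count_flat (bmax b) _ h2 hd0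
    rw [e] at c1 c2
    rw [List.countP_cons, List.countP_cons] at c1 c2
    rw [List.length_cons, Finset.sum_range_succ', e, inversions_cons, inversions_cons, ih',
      List.countP_cons]
    simp only [List.getD_cons_succ, List.drop_succ_cons, List.getD_cons_zero, List.drop_zero]
    have hsp : SP b ((b :: L).foldr (· ∪ ·) ∅) =
        (flatAux L).countP (fun x => decide (x < bmin b)) +
        (flatAux L).countP (fun x => decide (x < bmax b)) := by
      unfold SP
      rw [h2 b (by simp)]
      generalize (b :: L).foldr (· ∪ ·) ∅ = P at *
      have : ∑ i ∈ b, ((P.filter (fun p => p < i)).card + 1) =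
          ((P.filter (fun p => p < bmin b)).card + 1) +
          ((P.filter (fun p => p < bmax b)).card + 1) := by
        conv_lhs => rw [hb]
        rw [Finset.sum_pair hlt.ne]
      rw [this, ← c1, ← c2]
      simp only [hlt, hlt.not_gt, lt_irrefl, decide_true, decide_false, if_true, if_false,
        Bool.false_eq_true]
      omega
    rw [hsp]
    simp only [hlt.not_gt, decide_false, if_false, Bool.false_eq_true]
    omega

/-- `sgn(𝒫) = (−1)^{Σ_{k=1}^{m} S(P_k, P_k ∪ P_{k+1} ∪ … ∪ P_m)}` for a perfect
matching `𝒫 = P_1|…|P_m` in canonical form. -/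
theorem stmt3 (m : ℕ) (hm : 1 ≤ m) (S : Finset ℕ) (hS : S.card = 2 * m)
    (M : Finset (Finset ℕ)) (hM : M ∈ perfMatchings S) :
    pmSign M =
      (-1) ^ (∑ K ∈ Finset.range m,
        SP ((blockList M).getD K ∅) (((blockList M).drop K).foldr (· ∪ ·) ∅)) := by
  classical
  obtain ⟨h2, hd, hsup⟩ : IsPerfectMatching S M := by
    unfold perfMatchings at hM
    exact (Finset.mem_filter.mp hM).2
  have hmax : ∀ b ∈ M, bmax b ∈ b := by
    intro b hb
    have := (block_pair b (h2 b hb)).2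
    have h : bmax b ∈ ({bmin b, bmax b} : Finset ℕ) := by simp
    rwa [← this] at h
  have huniq : ∀ b ∈ M, ∀ c ∈ M, ∀ x, x ∈ b → x ∈ c → b = c := by
    intro b hb c hc x hx hx'
    by_contra hne
    exact Finset.disjoint_left.mp (hd b hb c hc hne) hx hx'
  have hblock : ∀ b ∈ M, blockOf M (bmax b) = b := by
    intro b hb
    have : M.filter (fun c => bmax b ∈ c) = {b} := by
      ext c
      simp only [Finset.mem_filter, Finset.mem_singleton]
      constructor
      · rintro ⟨hc, h⟩
        exact huniq c hc b hb _ h (hmax b hb)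
      · rintro rfl
        exact ⟨hb, hmax _ hb⟩
    rw [blockOf, this]; simp
  have hinj : Set.InjOn bmax (M : Set (Finset ℕ)) := by
    intro b hb c hc h
    rw [← hblock b hb, ← hblock c hc, h]
  have hcard : M.card = m := by
    have : S.card = ∑ b ∈ M, b.card := by
      rw [← hsup, Finset.sup_eq_biUnion, Finset.card_biUnion]
      · rfl
      · intro b hb c hc hne; exact hd b hb c hc hne
    rw [Finset.sum_congr rfl h2] at this
    simp at this
    omega
  have hlen : (blockList M).length = m := by
    rw [blockList, List.length_map, Finset.length_sort, Finset.card_image_of_injOn hinj, hcard]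
  have hmem : ∀ b ∈ blockList M, b ∈ M := by
    intro b hb
    simp only [blockList, List.mem_map, Finset.mem_sort, Finset.mem_image] at hb
    obtain ⟨_, ⟨c, hc, rfl⟩, rfl⟩ := hb
    rw [hblock c hc]; exact hc
  have hnd : (blockList M).Nodup := by
    unfold blockList
    refine List.Nodup.map_on ?_ (Finset.sort_nodup _ _)
    intro x hx y hy hxy
    simp only [Finset.mem_sort, Finset.mem_image] at hx hy
    obtain ⟨b, hb, rfl⟩ := hx
    obtain ⟨c, hc, rfl⟩ := hy
    rw [hblock b hb, hblock c hc] at hxy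
    rw [hxy]
  have hpw : (blockList M).Pairwise Disjoint :=
    List.Pairwise.imp_of_mem (fun {b c} hb hc hne => hd b (hmem b hb) c (hmem c hc) hne) hnd
  have := inv_flat (blockList M) (fun b hb => h2 b (hmem b hb)) hpw
  rw [hlen] at this
  rw [pmSign, ← this]
  rfl
end

section
/- Let S ⊆ ℕ be a finite set of even cardinality. Then Σ_{𝒫 ∈ π₂(S)} sgn(𝒫) = 1. -/
theorem aux_mem {S : Finset ℕ} {M : Finset (Finset ℕ)} (h : IsPerfectMatching S M) (x : ℕ) :
    x ∈ S ↔ ∃ b ∈ M, x ∈ b := by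
  rw [← h.2.2, Finset.mem_sup]
  simp

theorem aux_pm_iff (S : Finset ℕ) (M : Finset (Finset ℕ)) :
    IsPerfectMatching S M ↔ (∀ b ∈ M, b.card = 2) ∧
      (∀ b ∈ M, ∀ c ∈ M, b ≠ c → Disjoint b c) ∧ ∀ x, x ∈ S ↔ ∃ b ∈ M, x ∈ b := by
  constructor
  · intro h
    exact ⟨h.1, h.2.1, aux_mem h⟩
  · rintro ⟨h1, h2, h3⟩
    refine ⟨h1, h2, ?_⟩
    ext x
    rw [h3, Finset.mem_sup]
    simp

open Classical in
theorem aux_mem_perf (S : Finset ℕ) (M : Finset (Finset ℕ)) :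
    M ∈ perfMatchings S ↔ IsPerfectMatching S M := by
  unfold perfMatchings
  rw [Finset.mem_filter, and_iff_right_iff_imp]
  intro h
  rw [Finset.mem_powerset]
  intro b hb
  rw [Finset.mem_powerset]
  intro x hx
  exact (aux_mem h x).2 ⟨b, hb, hx⟩

theorem aux_insert {S : Finset ℕ} {M : Finset (Finset ℕ)} {a m : ℕ} (h : IsPerfectMatching S M)
    (ham : a < m) (ha : a ∉ S) (hm : m ∉ S) :
    IsPerfectMatching (insert a (insert m S)) (insert {a, m} M) := by
  have hd : ∀ b ∈ M, Disjoint ({a, m} : Finset ℕ) b := by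
    intro b hb
    have h1 : a ∉ b := fun hh => ha ((aux_mem h _).2 ⟨b, hb, hh⟩)
    have h2 : m ∉ b := fun hh => hm ((aux_mem h _).2 ⟨b, hb, hh⟩)
    simp [h1, h2]
  rw [aux_pm_iff]
  refine ⟨?_, ?_, ?_⟩
  · intro b hb
    rcases Finset.mem_insert.1 hb with rfl | hb
    · exact Finset.card_pair ham.ne
    · exact h.1 b hb
  · intro b hb c hc hbc
    rcases Finset.mem_insert.1 hb with rfl | hb <;> rcases Finset.mem_insert.1 hc with rfl | hc
    · exact absurd rfl hbc
    · exact hd _ hc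
    · exact (hd _ hb).symm
    · exact h.2.1 b hb c hc hbc
  · intro x
    simp only [Finset.mem_insert, aux_mem h, exists_eq_or_imp, Finset.mem_singleton, or_assoc]

theorem aux_decomp {S : Finset ℕ} {M : Finset (Finset ℕ)} {m : ℕ} (h : IsPerfectMatching S M)
    (hm : m ∈ S) (hmax : ∀ x ∈ S, x ≤ m) :
    ∃ a M', a ∈ S ∧ a < m ∧ IsPerfectMatching ((S.erase m).erase a) M' ∧ {a, m} ∉ M' ∧
      M = insert {a, m} M' := by
  obtain ⟨b, hb, hmb⟩ := (aux_mem h m).1 hm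
  obtain ⟨a, hab⟩ : ∃ a, a ≠ m ∧ b = {a, m} := by
    obtain ⟨x, y, hxy, rfl⟩ := Finset.card_eq_two.1 (h.1 b hb)
    rcases Finset.mem_insert.1 hmb with rfl | h'
    · exact ⟨y, hxy.symm, Finset.pair_comm _ _⟩
    · rw [Finset.mem_singleton] at h'
      subst h'
      exact ⟨x, hxy, rfl⟩
  obtain ⟨hne, rfl⟩ := hab
  have haS : a ∈ S := (aux_mem h a).2 ⟨_, hb, by simp⟩
  refine ⟨a, M.erase {a, m}, haS, lt_of_le_of_ne (hmax a haS) hne, ?_, by simp,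
    (Finset.insert_erase hb).symm⟩
  rw [aux_pm_iff]
  refine ⟨fun b hb => h.1 b (Finset.mem_of_mem_erase hb), fun b hb c hc =>
    h.2.1 b (Finset.mem_of_mem_erase hb) c (Finset.mem_of_mem_erase hc), ?_⟩
  intro x
  simp only [Finset.mem_erase]
  constructor
  · rintro ⟨h1, h2, h3⟩
    obtain ⟨c, hc, hxc⟩ := (aux_mem h x).1 h3
    refine ⟨c, ⟨?_, hc⟩, hxc⟩
    rintro rfl
    simp [h1, h2] at hxc
  · rintro ⟨c, ⟨hc1, hc⟩, hxc⟩
    have := Finset.disjoint_left.1 (h.2.1 c hc _ hb hc1) hxc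
    simp only [Finset.mem_insert, Finset.mem_singleton, not_or] at this
    exact ⟨this.1, this.2, (aux_mem h x).2 ⟨c, hc, hxc⟩⟩

theorem aux_bmax {a m : ℕ} (h : a < m) : bmax {a, m} = m := by
  simp [bmax, h.le]

theorem aux_bmin {a m : ℕ} (h : a < m) : bmin {a, m} = a := by
  have : ({a, m} : Finset ℕ).erase m = {a} := by
    ext x
    simp only [Finset.mem_erase, Finset.mem_insert, Finset.mem_singleton]
    omega
  simp [bmin, aux_bmax h, this]

theorem aux_bmax_mem {b : Finset ℕ} (h : b.card = 2) : bmax b ∈ b := by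
  have hb : b.Nonempty := by
    rw [← Finset.card_pos]; omega
  obtain ⟨x, hx, h2⟩ := Finset.exists_mem_eq_sup b hb id
  unfold bmax
  rw [h2]
  exact hx

theorem aux_sort {T : Finset ℕ} {m : ℕ} (h : ∀ x ∈ T, x < m) :
    (insert m T).sort (· ≤ ·) = T.sort (· ≤ ·) ++ [m] := by
  have hm : m ∉ T := fun hh => lt_irrefl _ (h m hh)
  refine List.Perm.eq_of_pairwise' (r := (· ≤ ·)) (Finset.pairwise_sort _ _) ?_ ?_
  · rw [List.pairwise_append]
    refine ⟨Finset.pairwise_sort _ _, by simp, ?_⟩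
    intro x hx y hy
    simp only [Finset.mem_sort] at hx
    simp only [List.mem_singleton] at hy
    subst hy
    exact (h x hx).le
  · rw [← Multiset.coe_eq_coe, Finset.sort_eq, Finset.insert_val_of_notMem hm]
    rw [← Multiset.coe_add, Finset.sort_eq, ← Multiset.singleton_add, add_comm]
    rfl

theorem aux_flat {S : Finset ℕ} {M : Finset (Finset ℕ)} {a m : ℕ} (h : IsPerfectMatching S M)
    (ham : a < m) (ha : a ∉ S) (hm : ∀ x ∈ S, x < m) :
    flatList (insert {a, m} M) = flatList M ++ [a, m] := by
  have hmS : m ∉ S := fun hh => lt_irrefl _ (hm m hh)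
  have hT : ∀ x ∈ M.image bmax, x ∈ S := by
    intro x hx
    obtain ⟨b, hb, rfl⟩ := Finset.mem_image.1 hx
    exact (aux_mem h _).2 ⟨b, hb, aux_bmax_mem (h.1 b hb)⟩
  have h1 : blockList (insert {a, m} M) = blockList M ++ [{a, m}] := by
    unfold blockList
    rw [Finset.image_insert, aux_bmax ham, aux_sort (fun x hx => hm x (hT x hx)), List.map_append]
    congr 1
    · apply List.map_congr_left
      intro v hv
      rw [Finset.mem_sort] at hv
      have hvS := hT v hv
      have hv' : v ∉ ({a, m} : Finset ℕ) := by
        simp only [Finset.mem_insert, Finset.mem_singleton, not_or]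
        constructor <;> rintro rfl <;> contradiction
      unfold blockOf
      rw [Finset.filter_insert, if_neg hv']
    · have : M.filter (fun b => m ∈ b) = ∅ := by
        rw [Finset.filter_eq_empty_iff]
        intro b hb hmb
        exact hmS ((aux_mem h _).2 ⟨b, hb, hmb⟩)
      simp only [List.map_cons, List.map_nil]
      unfold blockOf
      rw [Finset.filter_insert, if_pos (by simp), this]
      simp
  have h2 : ∀ l : List (Finset ℕ), (l ++ [{a, m}]).foldr (fun b l => bmin b :: bmax b :: l) [] =
      l.foldr (fun b l => bmin b :: bmax b :: l) [] ++ [a, m] := by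
    intro l
    induction l with
    | nil => simp [aux_bmin ham, aux_bmax ham]
    | cons b l ih => simp only [List.cons_append, List.foldr_cons, ih]
  unfold flatList
  rw [h1, h2]

theorem aux_inv (l : List ℕ) (a : ℕ) :
    inversions (l ++ [a]) = inversions l + l.countP (fun x => decide (a < x)) := by
  have hc : ∀ l : List ℕ, l.countP (fun x => decide (a < x)) =
      ∑ i ∈ Finset.range l.length, if a < l.getD i 0 then 1 else 0 := by
    intro l
    induction l with
    | nil => simp
    | cons b l ih =>
      rw [List.countP_cons, List.length_cons, Finset.sum_range_succ', ih]
      simp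
  rw [hc]
  unfold inversions
  have hg : ∀ i ∈ Finset.range l.length, (l ++ [a]).getD i 0 = l.getD i 0 := by
    intro i hi
    rw [Finset.mem_range] at hi
    exact List.getD_append _ _ _ _ hi
  have hl : (l ++ [a]).getD l.length 0 = a := by simp
  rw [List.length_append, List.length_singleton, Finset.sum_range_succ]
  have h0 : ∑ j ∈ Finset.range (l.length + 1),
      (if l.length < j ∧ (l ++ [a]).getD j 0 < (l ++ [a]).getD l.length 0 then 1 else 0) = 0 := by
    apply Finset.sum_eq_zero
    intro j hj
    rw [Finset.mem_range] at hj
    rw [if_neg]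
    omega
  rw [h0, add_zero, ← Finset.sum_add_distrib]
  apply Finset.sum_congr rfl
  intro i hi
  rw [Finset.sum_range_succ, hg i hi, hl]
  congr 1
  · apply Finset.sum_congr rfl
    intro j hj
    rw [hg j hj]
  · rw [Finset.mem_range] at hi
    simp [hi]

theorem aux_countP (p : ℕ → Bool) (n : ℕ) : ∀ (S : Finset ℕ) (M : Finset (Finset ℕ)), S.card = n →
    IsPerfectMatching S M → (flatList M).countP p = (S.filter (fun x => p x = true)).card := by
  induction n using Nat.strong_induction_on with
  | _ n ih =>
    intro S M hn h
    rcases S.eq_empty_or_nonempty with rfl | hne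
    · have : M = ∅ := by
        rw [Finset.eq_empty_iff_forall_notMem]
        intro b hb
        have := (aux_mem h _).2 ⟨b, hb, aux_bmax_mem (h.1 b hb)⟩
        simp at this
      subst this
      simp [flatList, blockList]
    · have hmS := S.max'_mem hne
      have hmax : ∀ x ∈ S, x ≤ S.max' hne := fun x hx => S.le_max' x hx
      generalize S.max' hne = m at hmS hmax
      obtain ⟨a, M', haS, ham, h', -, rfl⟩ := aux_decomp h hmS hmax
      have haS' : a ∈ S.erase m := Finset.mem_erase.2 ⟨ham.ne, haS⟩
      rw [aux_flat h' ham (by simp) (by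
        intro x hx
        simp only [Finset.mem_erase] at hx
        exact lt_of_le_of_ne (hmax x hx.2.2) hx.2.1), List.countP_append]
      have hcard : ((S.erase m).erase a).card < n := by
        rw [← hn]
        exact lt_of_le_of_lt (Finset.card_erase_le) (Finset.card_erase_lt_of_mem hmS)
      rw [ih _ hcard _ M' rfl h']
      conv_rhs => rw [← Finset.insert_erase hmS, ← Finset.insert_erase haS']
      simp only [Finset.card_filter]
      rw [Finset.sum_insert (by simp [ham.ne']), Finset.sum_insert (by simp)]
      simp only [List.countP_cons, List.countP_nil]
      ring

theorem aux_alt (T : Finset ℕ) :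
    ∑ a ∈ T, (-1 : ℤ) ^ (T.filter (fun x => a < x)).card = if Odd T.card then 1 else 0 := by
  induction T using Finset.induction_on_min with
  | empty => simp
  | insert a T h ih =>
    have ha : a ∉ T := fun hh => lt_irrefl _ (h a hh)
    rw [Finset.sum_insert ha, Finset.card_insert_of_notMem ha, Finset.filter_insert,
      if_neg (lt_irrefl a), Finset.filter_true_of_mem h]
    rw [Finset.sum_congr rfl (g := fun b => (-1 : ℤ) ^ (T.filter (fun x => b < x)).card), ih]
    · rcases Nat.even_or_odd T.card with hT | hT
      · rw [hT.neg_one_pow, if_neg (by simpa using hT), if_pos hT.add_one]; rfl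
      · rw [hT.neg_one_pow, if_pos hT, if_neg (by simpa using hT.add_one)]; rfl
    · intro b hb
      rw [Finset.filter_insert, if_neg (h b hb).not_gt]

theorem aux_sign {S : Finset ℕ} {M : Finset (Finset ℕ)} {a m : ℕ} (h : IsPerfectMatching S M)
    (ham : a < m) (ha : a ∉ S) (hm : ∀ x ∈ S, x < m) :
    pmSign (insert {a, m} M) = (-1) ^ (S.filter (fun x => a < x)).card * pmSign M := by
  have h1 : (flatList M).countP (fun x => decide (a < x)) = (S.filter (fun x => a < x)).card := by
    rw [aux_countP _ _ S M rfl h]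
    simp
  have h2 : (flatList M).countP (fun x => decide (m < x)) = 0 := by
    rw [aux_countP _ _ S M rfl h, Finset.card_eq_zero, Finset.filter_eq_empty_iff]
    intro x hx
    simpa using (hm x hx).le
  unfold pmSign
  rw [aux_flat h ham ha hm]
  rw [show flatList M ++ [a, m] = (flatList M ++ [a]) ++ [m] by simp, aux_inv, aux_inv, h1,
    List.countP_append, h2]
  simp only [List.countP_cons, List.countP_nil, decide_eq_true_eq, ham.not_gt, if_false, add_zero]
  rw [pow_add, mul_comm]

theorem aux_sum (S : Finset ℕ) (m : ℕ) (hmS : m ∈ S) (hmax : ∀ x ∈ S, x ≤ m)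
    (f : Finset (Finset ℕ) → ℤ) :
    ∑ M ∈ perfMatchings S, f M =
      ∑ a ∈ S.erase m, ∑ M ∈ perfMatchings ((S.erase m).erase a), f (insert {a, m} M) := by
  rw [Finset.sum_sigma']
  symm
  refine Finset.sum_bij (fun p _ => insert {p.1, m} p.2) ?_ ?_ ?_ ?_
  · rintro ⟨a, M⟩ hp
    rw [Finset.mem_sigma, aux_mem_perf] at hp
    obtain ⟨ha, h⟩ := hp
    dsimp only at ha h ⊢
    have ha2 := Finset.mem_erase.1 ha
    rw [aux_mem_perf]
    have := aux_insert h (lt_of_le_of_ne (hmax a ha2.2) ha2.1) (by simp) (by simp)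
    rwa [Finset.insert_comm, Finset.insert_erase ha, Finset.insert_erase hmS] at this
  · rintro ⟨a, M⟩ hp ⟨b, N⟩ hq heq
    rw [Finset.mem_sigma, aux_mem_perf] at hp hq
    obtain ⟨ha, h⟩ := hp
    obtain ⟨hb, h'⟩ := hq
    dsimp only at ha h hb h' heq
    have key : ∀ (c : ℕ) (K : Finset (Finset ℕ)),
        IsPerfectMatching ((S.erase m).erase c) K → ∀ t ∈ K, m ∉ t := by
      intro c K hK t ht hmt
      have := (aux_mem hK m).2 ⟨t, ht, hmt⟩
      simp at this
    have hab : a = b := by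
      have h1 : ({a, m} : Finset ℕ) ∈ insert {b, m} N := by
        rw [← heq]; simp
      rcases Finset.mem_insert.1 h1 with h2 | h2
      · have h3 : a ∈ ({b, m} : Finset ℕ) := by rw [← h2]; simp
        simp only [Finset.mem_insert, Finset.mem_singleton] at h3
        exact h3.resolve_right (Finset.mem_erase.1 ha).1
      · exact absurd (by simp) (key b N h' _ h2)
    subst hab
    have hM : ({a, m} : Finset ℕ) ∉ M := fun hh => key a M h _ hh (by simp)
    have hN : ({a, m} : Finset ℕ) ∉ N := fun hh => key a N h' _ hh (by simp)
    have : M = N := by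
      rw [← Finset.erase_insert hM, heq, Finset.erase_insert hN]
    rw [this]
  · intro M hM
    rw [aux_mem_perf] at hM
    obtain ⟨a, M', haS, ham, h', -, rfl⟩ := aux_decomp hM hmS hmax
    exact ⟨⟨a, M'⟩, by
      rw [Finset.mem_sigma, aux_mem_perf]
      exact ⟨Finset.mem_erase.2 ⟨ham.ne, haS⟩, h'⟩, rfl⟩
  · intros; rfl

theorem aux_main (n : ℕ) : ∀ (S : Finset ℕ), S.card = n → Even n →
    ∑ M ∈ perfMatchings S, pmSign M = 1 := by
  induction n using Nat.strong_induction_on with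
  | _ n ih =>
    intro S hn he
    rcases S.eq_empty_or_nonempty with rfl | hne
    · have : perfMatchings (∅ : Finset ℕ) = {∅} := by
        ext M
        rw [aux_mem_perf, Finset.mem_singleton]
        constructor
        · intro h
          rw [Finset.eq_empty_iff_forall_notMem]
          intro b hb
          have := (aux_mem h _).2 ⟨b, hb, aux_bmax_mem (h.1 b hb)⟩
          simp at this
        · rintro rfl
          rw [aux_pm_iff]
          simp
      rw [this]
      simp [pmSign, flatList, blockList, inversions]
    · have hmS := S.max'_mem hne
      have hmax : ∀ x ∈ S, x ≤ S.max' hne := fun x hx => S.le_max' x hx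
      generalize S.max' hne = m at hmS hmax
      have hc := Finset.card_erase_of_mem hmS
      have hpos : 0 < S.card := hne.card_pos
      rw [aux_sum S m hmS hmax]
      have hodd : Odd (S.erase m).card := by
        rw [hc, hn]
        obtain ⟨k, hk⟩ := he
        exact ⟨k - 1, by omega⟩
      have halt := aux_alt (S.erase m)
      rw [if_pos hodd] at halt
      rw [← halt]
      apply Finset.sum_congr rfl
      intro a ha
      have ha2 := Finset.mem_erase.1 ha
      have ham : a < m := lt_of_le_of_ne (hmax a ha2.2) ha2.1
      have hc2 := Finset.card_erase_of_mem ha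
      have hpos2 : 0 < (S.erase m).card := Finset.card_pos.2 ⟨a, ha⟩
      have hf : ((S.erase m).erase a).filter (fun x => a < x) =
          (S.erase m).filter (fun x => a < x) := by
        ext x
        simp only [Finset.mem_filter, Finset.mem_erase]
        constructor
        · rintro ⟨⟨_, h⟩, h'⟩
          exact ⟨h, h'⟩
        · rintro ⟨h, h'⟩
          exact ⟨⟨h'.ne', h⟩, h'⟩
      have hs : ∀ M ∈ perfMatchings ((S.erase m).erase a), pmSign (insert {a, m} M) =
          (-1) ^ ((S.erase m).filter (fun x => a < x)).card * pmSign M := by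
        intro M hM
        rw [aux_mem_perf] at hM
        rw [aux_sign hM ham (by simp) (by
          intro x hx
          simp only [Finset.mem_erase] at hx
          exact lt_of_le_of_ne (hmax x hx.2.2) hx.2.1), hf]
      rw [Finset.sum_congr rfl hs, ← Finset.mul_sum,
        ih _ (by omega) ((S.erase m).erase a) rfl (by
          rw [hc2]
          obtain ⟨k, hk⟩ := hodd
          exact ⟨k, by omega⟩), mul_one]

/-- `Σ_{𝒫 ∈ π₂(S)} sgn(𝒫) = 1` for a finite set `S ⊆ ℕ` of even cardinality. -/
theorem stmt4 (S : Finset ℕ) (hS : Even S.card) :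
    ∑ M ∈ perfMatchings S, pmSign M = 1 := by
  exact aux_main _ S rfl hS
end

section
/- Let F ⊆ P ⊆ ℕ be finite sets. Then S(F, P) + S(P \ F, P) = |F| · (|P| − |F|). -/
/-- The positions of all elements of `P` sum to a triangular number. -/
lemma two_mul_sum_pos (P : Finset ℕ) :
    2 * ∑ i ∈ P, ((P.filter (fun p => p < i)).card + 1) = P.card * (P.card + 1) := by
  induction P using Finset.induction_on_max with
  | empty => simp
  | insert a s ha ih =>
    have hn : a ∉ s := fun h => lt_irrefl _ (ha a h)
    rw [Finset.sum_insert hn, Finset.card_insert_of_notMem hn]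
    have h1 : (insert a s).filter (fun p => p < a) = s := by
      ext x
      simp only [Finset.mem_filter, Finset.mem_insert]
      constructor
      · rintro ⟨h | h, h'⟩
        · omega
        · exact h
      · intro h
        exact ⟨Or.inr h, ha x h⟩
    have h2 : ∑ i ∈ s, (((insert a s).filter (fun p => p < i)).card + 1)
        = ∑ i ∈ s, ((s.filter (fun p => p < i)).card + 1) := by
      refine Finset.sum_congr rfl fun i hi => ?_
      rw [Finset.filter_insert, if_neg (not_lt.mpr (ha i hi).le)]
    rw [h1, h2, mul_add, ih]
    ring

lemma two_mul_SP (F P : Finset ℕ) (hFP : F ⊆ P) :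
    2 * SP F P + F.card * (F.card + 1)
      = 2 * ∑ i ∈ F, ((P.filter (fun p => p < i)).card + 1) := by
  have h1 := two_mul_sum_pos F
  have h2 : ∑ i ∈ F, ((F.filter (fun p => p < i)).card + 1)
      ≤ ∑ i ∈ F, ((P.filter (fun p => p < i)).card + 1) :=
    Finset.sum_le_sum fun i _ =>
      Nat.add_le_add_right (Finset.card_le_card (Finset.filter_subset_filter _ hFP)) 1
  unfold SP
  omega

/-- `S(F, P) + S(P \ F, P) = |F| · (|P| − |F|)`. -/
theorem stmt7 (F P : Finset ℕ) (hFP : F ⊆ P) :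
    SP F P + SP (P \ F) P = F.card * (P.card - F.card) := by
  have h1 := two_mul_SP F P hFP
  have h2 := two_mul_SP (P \ F) P Finset.sdiff_subset
  have h3 := two_mul_sum_pos P
  rw [← Finset.sum_sdiff hFP, mul_add] at h3
  have h4 := Finset.card_sdiff_add_card_eq_card hFP
  have h5 : P.card - F.card = (P \ F).card := by omega
  rw [h5]
  rw [← h4] at h3
  nlinarith
end

section
/- Let F ⊆ P ⊆ ℕ be finite sets and let F' ⊆ F. Then S(F \ F', P \ F') = S(F, P) − Σ_{l ∈ F'}[S({l}, P) − S({l}, F)] = S(F, P) − S(F', P) + S(F', F) (equalities of integers). -/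
theorem aux_sum_s9 (F : Finset ℕ) :
    ∑ i ∈ F, ((F.filter (fun p => p < i)).card + 1) = F.card * (F.card + 1) / 2 := by
  induction F using Finset.induction_on_max with
  | empty => simp
  | insert a s ha ih =>
    have hn : a ∉ s := fun h => lt_irrefl _ (ha a h)
    rw [Finset.sum_insert hn, Finset.card_insert_of_notMem hn]
    have h1 : ((insert a s).filter (fun p => p < a)) = s := by
      ext x
      simp only [Finset.mem_filter, Finset.mem_insert]
      constructor
      · rintro ⟨rfl | h, h2⟩
        · exact absurd h2 (lt_irrefl _)
        · exact h
      · intro h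
        exact ⟨Or.inr h, ha x h⟩
    have h2 : ∀ i ∈ s, ((insert a s).filter (fun p => p < i)).card + 1
        = (s.filter (fun p => p < i)).card + 1 := by
      intro i hi
      rw [Finset.filter_insert, if_neg (not_lt.mpr (ha i hi).le)]
    rw [h1, Finset.sum_congr rfl h2, ih]
    have : (s.card + 1) * (s.card + 1 + 1) = s.card * (s.card + 1) + 2 * (s.card + 1) := by ring
    rw [this]
    omega

theorem aux_split (F P : Finset ℕ) (h : F ⊆ P) (i : ℕ) :
    (P.filter (fun p => p < i)).card
      = ((P \ F).filter (fun p => p < i)).card + (F.filter (fun p => p < i)).card := by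
  rw [← Finset.card_union_of_disjoint, ← Finset.filter_union, Finset.sdiff_union_of_subset h]
  exact Finset.disjoint_filter_filter Finset.sdiff_disjoint

theorem aux_SP (F P : Finset ℕ) (h : F ⊆ P) :
    SP F P = ∑ i ∈ F, ((P \ F).filter (fun p => p < i)).card := by
  unfold SP
  rw [← aux_sum_s9 F, Finset.sum_congr rfl (fun i _ => by rw [aux_split F P h i, add_assoc]),
    Finset.sum_add_distrib, Nat.add_sub_cancel]

theorem aux_single (l : ℕ) (P : Finset ℕ) :
    SP {l} P = (P.filter (fun p => p < l)).card := by
  simp [SP]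

/-- `S(F \ F', P \ F') = S(F,P) − Σ_{l ∈ F'}[S({l},P) − S({l},F)]
= S(F,P) − S(F',P) + S(F',F)` for `F' ⊆ F ⊆ P`. -/
theorem stmt9 (F P F' : Finset ℕ) (hFP : F ⊆ P) (hF' : F' ⊆ F) :
    (SP (F \ F') (P \ F') : ℤ)
        = (SP F P : ℤ) - ∑ l ∈ F', ((SP {l} P : ℤ) - (SP {l} F : ℤ)) ∧
      (SP (F \ F') (P \ F') : ℤ) = (SP F P : ℤ) - (SP F' P : ℤ) + (SP F' F : ℤ) := by
  have hd : (P \ F') \ (F \ F') = P \ F := by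
    ext x
    simp only [Finset.mem_sdiff]
    have := @hF' x
    tauto
  have e1 : SP (F \ F') (P \ F') = ∑ i ∈ F \ F', ((P \ F).filter (fun p => p < i)).card := by
    rw [aux_SP _ _ (Finset.sdiff_subset_sdiff hFP (Finset.Subset.refl _)), hd]
  have e2 : SP F P = SP (F \ F') (P \ F')
      + ∑ i ∈ F', ((P \ F).filter (fun p => p < i)).card := by
    rw [e1, aux_SP _ _ hFP, Finset.sum_sdiff hF']
  have e3 : SP F' P = ∑ i ∈ F', ((P \ F).filter (fun p => p < i)).card + SP F' F := by
    rw [aux_SP _ _ (hF'.trans hFP), aux_SP _ _ hF', ← Finset.sum_add_distrib]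
    refine Finset.sum_congr rfl fun i _ => ?_
    have a1 := aux_split F P hFP i
    have a2 := aux_split F' F hF' i
    have a3 := aux_split F' P (hF'.trans hFP) i
    omega
  have e4 : ∑ l ∈ F', ((SP {l} P : ℤ) - (SP {l} F : ℤ))
      = ((∑ i ∈ F', ((P \ F).filter (fun p => p < i)).card : ℕ) : ℤ) := by
    rw [Nat.cast_sum]
    refine Finset.sum_congr rfl fun i _ => ?_
    rw [aux_single, aux_single, aux_split F P hFP i]
    push_cast
    ring
  constructor
  · rw [e4]
    omega
  · omega
end
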